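/- Strong normalization of σπα: the one-step σπα-reduction is strongly normalizing on the set of terms, on the set of substitutions, and the one-step reduction ⇝ (including α₂) is strongly normalizing on the set of judgements of the form Γ ⊢ M; that is, there is no infinite reduction sequence in any of these three settings. -/

import Mathlib

/- Named terms and substitutions of the λπ-calculus. Variables are natural numbers. -/
mutual
inductive Tm : Type
  | var : ℕ → Tm
  | app : Tm → Tm → Tm
  | lam : ℕ → Tm → Tm
  | clos : Subst → Tm → Tm
inductive Subst : Type
  | id : Subst
  | pi : ℕ → Subst
  | cons : Subst → Tm → ℕ → Subst
  | comp : Subst → Subst → Subst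
end

/- Contexts are lists of variables; the head of the list is the *rightmost* variable,
so the context `Γ, a` of the paper is `a :: Γ`. -/
mutual
/-- `WfTm Γ M` is the judgement `Γ ⊢ M`. -/
inductive WfTm : List ℕ → Tm → Prop
  | var (Γ : List ℕ) (a : ℕ) : WfTm (a :: Γ) (.var a)
  | weak {Γ : List ℕ} {a : ℕ} (b : ℕ) : a ≠ b → WfTm Γ (.var a) → WfTm (b :: Γ) (.var a)
  | app {Γ M N} : WfTm Γ M → WfTm Γ N → WfTm Γ (.app M N)
  | lam {Γ a M} : WfTm (a :: Γ) M → WfTm Γ (.lam a M)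
  | clos {Γ s Δ M} : WfSub Γ s Δ → WfTm Δ M → WfTm Γ (.clos s M)
/-- `WfSub Γ s Δ` is the judgement `Γ ⊢ s ▷ Δ`. -/
inductive WfSub : List ℕ → Subst → List ℕ → Prop
  | id (Γ) : WfSub Γ .id Γ
  | pi (Γ a) : WfSub (a :: Γ) (.pi a) Γ
  | cons {Γ s Δ N} (a) : WfSub Γ s Δ → WfTm Γ N → WfSub Γ (.cons s N a) (a :: Δ)
  | comp {Γ s Δ q Θ} : WfSub Γ s Δ → WfSub Δ q Θ → WfSub Γ (.comp s q) Θ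
end

/-- The operator `O_{λa}` on sequences of finite sets (sequences are 0-indexed:
index `n` corresponds to the paper's index `n+1`). -/
def Olam (a : ℕ) (A : ℕ → Finset ℕ) : ℕ → Finset ℕ
  | 0 => (A 0).erase a ∪ A 1
  | n + 1 => A (n + 2)

/-- The operator `O_π`. -/
def Opi (A : ℕ → Finset ℕ) : ℕ → Finset ℕ
  | 0 => ∅
  | n + 1 => A n

mutual
/-- The free-variable sequence of a term: `FV M n` is the paper's `FV_{n+1}(M)`. -/
def FV : Tm → ℕ → Finset ℕ
  | .var a => fun n => if n = 0 then {a} else ∅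
  | .app M N => fun n => FV M n ∪ FV N n
  | .lam a M => Olam a (FV M)
  | .clos s M => Osub s (FV M)
/-- The operator `O_s` associated with a substitution `s`. -/
def Osub : Subst → (ℕ → Finset ℕ) → (ℕ → Finset ℕ)
  | .id => fun A => A
  | .pi _ => fun A => Opi A
  | .cons s N a => fun A n => Osub s (Olam a A) n ∪ FV N n
  | .comp s q => fun A => Osub s (Osub q A)
end

/-- Iterated abstraction `λΓ.M` (recall the head of the list is the rightmost variable). -/
def lamCtx : List ℕ → Tm → Tm
  | [], M => M
  | a :: Γ, M => lamCtx Γ (.lam a M)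

/-- Free variables of a judgement: `FV(Γ ⊢ M) = FV(λΓ.M)`. -/
def FVJ (Γ : List ℕ) (M : Tm) : ℕ → Finset ℕ := FV (lamCtx Γ M)

/-- Iterated lifting `⇑_Δ(s)`. -/
def Uparrow : List ℕ → Subst → Subst
  | [], s => s
  | a :: Δ, s => .cons (.comp (.pi a) (Uparrow Δ s)) (.var a) a

/- One-step reduction of the λπ-calculus (compatible closure).  The Boolean
parameter tells whether the rule `Beta` is allowed: `StepTm true` is λπ-reduction,
`StepTm false` is σπα-reduction. -/
mutual
inductive StepTm : Bool → Tm → Tm → Prop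
  | beta {a : ℕ} {M N : Tm} :
      StepTm true (.app (.lam a M) N) (.clos (.cons .id N a) M)
  | abs {β : Bool} {s : Subst} {a : ℕ} {M : Tm} :
      StepTm β (.clos s (.lam a M))
        (.lam a (.clos (.cons (.comp (.pi a) s) (.var a) a) M))
  | app {β : Bool} {s : Subst} {M N : Tm} :
      StepTm β (.clos s (.app M N)) (.app (.clos s M) (.clos s N))
  | consVar {β : Bool} {s : Subst} {N : Tm} {a : ℕ} :
      StepTm β (.clos (.cons s N a) (.var a)) N
  | new {β : Bool} {s : Subst} {N : Tm} {a b : ℕ} : a ≠ b →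
      StepTm β (.clos (.cons s N a) (.var b)) (.clos s (.var b))
  | idVar {β : Bool} {a : ℕ} : StepTm β (.clos .id (.var a)) (.var a)
  | clos {β : Bool} {s q : Subst} {M : Tm} :
      StepTm β (.clos s (.clos q M)) (.clos (.comp s q) M)
  | pi1 {β : Bool} {a b : ℕ} : a ≠ b → StepTm β (.clos (.pi a) (.var b)) (.var b)
  | pi2 {β : Bool} {s : Subst} {a b : ℕ} : a ≠ b →
      StepTm β (.clos (.comp s (.pi a)) (.var b)) (.clos s (.var b))
  | alpha1 {β : Bool} {a b : ℕ} {M : Tm} :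
      (∃ i, a ∈ FV (.lam a M) i) → (∀ i, b ∉ FV (.lam a M) i) →
      StepTm β (.lam a M) (.lam b (.clos (.cons (.pi b) (.var b) a) M))
  | lamCong {β : Bool} {a : ℕ} {M₁ M₂ : Tm} :
      StepTm β M₁ M₂ → StepTm β (.lam a M₁) (.lam a M₂)
  | appL {β : Bool} {M₁ M₂ N : Tm} : StepTm β M₁ M₂ → StepTm β (.app M₁ N) (.app M₂ N)
  | appR {β : Bool} {M N₁ N₂ : Tm} : StepTm β N₁ N₂ → StepTm β (.app M N₁) (.app M N₂)
  | closL {β : Bool} {s₁ s₂ : Subst} {M : Tm} :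
      StepSub β s₁ s₂ → StepTm β (.clos s₁ M) (.clos s₂ M)
  | closR {β : Bool} {s : Subst} {M₁ M₂ : Tm} :
      StepTm β M₁ M₂ → StepTm β (.clos s M₁) (.clos s M₂)
inductive StepSub : Bool → Subst → Subst → Prop
  | ass {β : Bool} {s q r : Subst} :
      StepSub β (.comp s (.comp q r)) (.comp (.comp s q) r)
  | idR {β : Bool} {s : Subst} : StepSub β (.comp s .id) s
  | idShift {β : Bool} {a : ℕ} : StepSub β (.comp .id (.pi a)) (.pi a)
  | consShift {β : Bool} {s : Subst} {N : Tm} {a : ℕ} :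
      StepSub β (.comp (.cons s N a) (.pi a)) s
  | map {β : Bool} {s q : Subst} {N : Tm} {a : ℕ} :
      StepSub β (.comp s (.cons q N a)) (.cons (.comp s q) (.clos s N) a)
  | consL {β : Bool} {s₁ s₂ : Subst} {N : Tm} {a : ℕ} :
      StepSub β s₁ s₂ → StepSub β (.cons s₁ N a) (.cons s₂ N a)
  | consR {β : Bool} {s : Subst} {N₁ N₂ : Tm} {a : ℕ} :
      StepTm β N₁ N₂ → StepSub β (.cons s N₁ a) (.cons s N₂ a)
  | compL {β : Bool} {s₁ s₂ q : Subst} :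
      StepSub β s₁ s₂ → StepSub β (.comp s₁ q) (.comp s₂ q)
  | compR {β : Bool} {s q₁ q₂ : Subst} :
      StepSub β q₁ q₂ → StepSub β (.comp s q₁) (.comp s q₂)
end

/-- One-step reduction `⇝` on judgements `Γ ⊢ M`, including the rule `α₂`.
`StepJ true` is λπ, `StepJ false` is σπα. -/
inductive StepJ (β : Bool) : List ℕ × Tm → List ℕ × Tm → Prop
  | step {Γ : List ℕ} {M₁ M₂ : Tm} : StepTm β M₁ M₂ → StepJ β (Γ, M₁) (Γ, M₂)
  | alpha2 {Γ Δ : List ℕ} {a b : ℕ} {M : Tm} :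
      (∃ i, a ∈ FVJ (Δ ++ [a]) M i) → (∀ i, b ∉ FVJ (Δ ++ [a]) M i) →
      StepJ β (Δ ++ a :: Γ, M)
        (Δ ++ b :: Γ, .clos (Uparrow Δ (.cons (.pi b) (.var b) a)) M)

/- Name-free (de Bruijn) terms and substitutions. -/
mutual
inductive NTm : Type
  | one : NTm
  | app : NTm → NTm → NTm
  | lam : NTm → NTm
  | clos : NSub → NTm → NTm
inductive NSub : Type
  | id : NSub
  | pi : NSub
  | cons : NSub → NTm → NSub
  | comp : NSub → NSub → NSub
end

/-- `piIter n` is the left-nested composition of `n+1` copies of `π`. -/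
def piIter : ℕ → NSub
  | 0 => .pi
  | k + 1 => .comp (piIter k) .pi

/-- `dbr n` is the de Bruijn index `n+1̲`: `dbr 0 = 1` and
`dbr (n+1) = ((…(π∘π)∘…)∘π)∘1` with `n+1` occurrences of `π`. -/
def dbr : ℕ → NTm
  | 0 => .one
  | n + 1 => .clos (piIter n) .one

/- One-step reduction of λσ (`NStepTm true`) resp. σ (`NStepTm false`)
on name-free terms/substitutions. -/
mutual
inductive NStepTm : Bool → NTm → NTm → Prop
  | beta {U V : NTm} : NStepTm true (.app (.lam U) V) (.clos (.cons .id V) U)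
  | abs {β : Bool} {u : NSub} {U : NTm} :
      NStepTm β (.clos u (.lam U)) (.lam (.clos (.cons (.comp .pi u) .one) U))
  | app {β : Bool} {u : NSub} {U V : NTm} :
      NStepTm β (.clos u (.app U V)) (.app (.clos u U) (.clos u V))
  | consVar {β : Bool} {u : NSub} {V : NTm} : NStepTm β (.clos (.cons u V) .one) V
  | idVar {β : Bool} : NStepTm β (.clos .id .one) .one
  | clos {β : Bool} {u v : NSub} {U : NTm} :
      NStepTm β (.clos u (.clos v U)) (.clos (.comp u v) U)
  | lamCong {β : Bool} {U₁ U₂ : NTm} : NStepTm β U₁ U₂ → NStepTm β (.lam U₁) (.lam U₂)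
  | appL {β : Bool} {U₁ U₂ V : NTm} : NStepTm β U₁ U₂ → NStepTm β (.app U₁ V) (.app U₂ V)
  | appR {β : Bool} {U V₁ V₂ : NTm} : NStepTm β V₁ V₂ → NStepTm β (.app U V₁) (.app U V₂)
  | closL {β : Bool} {u₁ u₂ : NSub} {U : NTm} :
      NStepSub β u₁ u₂ → NStepTm β (.clos u₁ U) (.clos u₂ U)
  | closR {β : Bool} {u : NSub} {U₁ U₂ : NTm} :
      NStepTm β U₁ U₂ → NStepTm β (.clos u U₁) (.clos u U₂)
inductive NStepSub : Bool → NSub → NSub → Prop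
  | ass {β : Bool} {u v w : NSub} : NStepSub β (.comp u (.comp v w)) (.comp (.comp u v) w)
  | idR {β : Bool} {u : NSub} : NStepSub β (.comp u .id) u
  | idShift {β : Bool} : NStepSub β (.comp .id .pi) .pi
  | consShift {β : Bool} {u : NSub} {V : NTm} : NStepSub β (.comp (.cons u V) .pi) u
  | map {β : Bool} {u v : NSub} {V : NTm} :
      NStepSub β (.comp u (.cons v V)) (.cons (.comp u v) (.clos u V))
  | consL {β : Bool} {u₁ u₂ : NSub} {V : NTm} :
      NStepSub β u₁ u₂ → NStepSub β (.cons u₁ V) (.cons u₂ V)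
  | consR {β : Bool} {u : NSub} {V₁ V₂ : NTm} :
      NStepTm β V₁ V₂ → NStepSub β (.cons u V₁) (.cons u V₂)
  | compL {β : Bool} {u₁ u₂ v : NSub} :
      NStepSub β u₁ u₂ → NStepSub β (.comp u₁ v) (.comp u₂ v)
  | compR {β : Bool} {u v₁ v₂ : NSub} :
      NStepSub β v₁ v₂ → NStepSub β (.comp u v₁) (.comp u v₂)
end

/- The correspondence `(Γ ⊢ M) ⟹ U` resp. `(Γ ⊢ s ▷ Δ) ⟹ u` between judgements and
name-free terms/substitutions (Definition 7.6 of the paper). -/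
mutual
inductive TrTm : List ℕ → Tm → NTm → Prop
  | var (Γ : List ℕ) (a : ℕ) : TrTm (a :: Γ) (.var a) (dbr 0)
  | weak {Γ : List ℕ} {a : ℕ} {n : ℕ} (b : ℕ) : a ≠ b →
      TrTm Γ (.var a) (dbr n) → TrTm (b :: Γ) (.var a) (dbr (n + 1))
  | app {Γ M N U V} : TrTm Γ M U → TrTm Γ N V → TrTm Γ (.app M N) (.app U V)
  | lam {Γ a M U} : TrTm (a :: Γ) M U → TrTm Γ (.lam a M) (.lam U)
  | clos {Γ s Δ M u U} : TrSub Γ s Δ u → TrTm Δ M U → TrTm Γ (.clos s M) (.clos u U)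
inductive TrSub : List ℕ → Subst → List ℕ → NSub → Prop
  | id (Γ) : TrSub Γ .id Γ .id
  | pi (Γ a) : TrSub (a :: Γ) (.pi a) Γ .pi
  | cons {Γ s Δ N u V} (a) : TrSub Γ s Δ u → TrTm Γ N V →
      TrSub Γ (.cons s N a) (a :: Δ) (.cons u V)
  | comp {Γ s Δ q Θ u v} : TrSub Γ s Δ u → TrSub Δ q Θ v →
      TrSub Γ (.comp s q) Θ (.comp u v)
end



inductive LTree : Type
  | leaf : LTree
  | node : ℕ → LTree → LTree → LTree

namespace LTree
/-- Lexicographic path order (right argument first) on binary trees. -/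
inductive Gt : LTree → LTree → Prop
  | leaf {r x y} : Gt (node r x y) leaf
  | l0 {r x y} : Gt (node r x y) x
  | r0 {r x y} : Gt (node r x y) y
  | l {r x y t} : Gt x t → Gt (node r x y) t
  | r {r x y t} : Gt y t → Gt (node r x y) t
  | prec {r r' x y x' y'} : r' < r → Gt (node r x y) x' → Gt (node r x y) y' →
      Gt (node r x y) (node r' x' y')
  | lex1 {r x y x' y'} : Gt y y' → Gt (node r x y) x' → Gt (node r x y) (node r x' y')
  | lex2 {r x y x'} : Gt x x' → Gt (node r x y) (node r x' y)

abbrev Lt (a b : LTree) : Prop := Gt b a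

theorem acc_leaf : Acc Lt leaf := ⟨_, fun t h => by cases h⟩

theorem acc_node (r : ℕ) : ∀ x y, Acc Lt x → Acc Lt y → Acc Lt (node r x y) := by
  induction r using Nat.strong_induction_on with
  | _ r ihr =>
    intro x y hx hy
    induction hy generalizing x with
    | intro y hy ihy =>
      induction hx with
      | intro x hx ihx =>
        refine ⟨_, fun t ht => ?_⟩
        have ax : Acc Lt x := ⟨_, hx⟩
        have ay : Acc Lt y := ⟨_, hy⟩
        change Gt (node r x y) t at ht
        induction t with
        | leaf => exact acc_leaf
        | node r' x' y' ih1 ih2 =>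
          cases ht with
          | l0 => exact ax
          | r0 => exact ay
          | l h => exact hx _ h
          | r h => exact hy _ h
          | prec h h1 h2 => exact ihr _ h _ _ (ih1 h1) (ih2 h2)
          | lex1 h h1 => exact ihy _ h _ (ih1 h1)
          | lex2 h => exact ihx _ h

theorem acc_all (t : LTree) : Acc Lt t := by
  induction t with
  | leaf => exact acc_leaf
  | node r x y h1 h2 => exact acc_node r x y h1 h2

theorem wf : WellFounded Lt := ⟨acc_all⟩

theorem ctxL {r r' x x' y} (h : Gt x x') (hr : r' ≤ r) : Gt (node r x y) (node r' x' y) := by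
  rcases hr.lt_or_eq with h1 | rfl
  · exact .prec h1 (.l h) .r0
  · exact .lex2 h

theorem ctxR {r r' x y y'} (h : Gt y y') (hr : r' ≤ r) : Gt (node r x y) (node r' x y') := by
  rcases hr.lt_or_eq with h1 | rfl
  · exact .prec h1 .l0 (.r h)
  · exact .lex1 h .l0

theorem lexle {r r' x y x' y'} (h : Gt y y') (h2 : Gt (node r x y) x') (hr : r' ≤ r) :
    Gt (node r x y) (node r' x' y') := by
  rcases hr.lt_or_eq with h1 | rfl
  · exact .prec h1 h2 (.r h)
  · exact .lex1 h h2
end LTree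

/-- Comparison of free-variable sequences. -/
def SLe (A B : ℕ → Finset ℕ) : Prop := ∀ n x, x ∈ A n → ∃ m, n ≤ m ∧ x ∈ B m

theorem SLe.refl (A) : SLe A A := fun n _ h => ⟨n, le_rfl, h⟩
theorem SLe.trans {A B C} (h : SLe A B) (h' : SLe B C) : SLe A C := fun n x hx => by
  obtain ⟨m, hm, h1⟩ := h n x hx
  obtain ⟨k, hk, h2⟩ := h' m x h1
  exact ⟨k, hm.trans hk, h2⟩
theorem SLe.of_sub {A B : ℕ → Finset ℕ} (h : ∀ n, A n ⊆ B n) : SLe A B :=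
  fun n _ hx => ⟨n, le_rfl, h n hx⟩
theorem SLe.union {A B C D : ℕ → Finset ℕ} (h : SLe A C) (h' : SLe B D) :
    SLe (fun n => A n ∪ B n) (fun n => C n ∪ D n) := fun n x hx => by
  rcases Finset.mem_union.1 hx with hx | hx
  · obtain ⟨m, hm, h1⟩ := h n x hx
    exact ⟨m, hm, Finset.mem_union_left _ h1⟩
  · obtain ⟨m, hm, h1⟩ := h' n x hx
    exact ⟨m, hm, Finset.mem_union_right _ h1⟩
theorem SLe.olam {A B : ℕ → Finset ℕ} (a : ℕ) (h : SLe A B) : SLe (Olam a A) (Olam a B) := by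
  have key : ∀ n x, x ∈ A (n+1) → ∃ m, n ≤ m ∧ x ∈ Olam a B m := by
    intro n x hx
    obtain ⟨m, hm, h1⟩ := h _ x hx
    match m, hm, h1 with
    | 1, hm, h1 => exact ⟨0, by omega, by simp [Olam, h1]⟩
    | m + 2, hm, h1 => exact ⟨m+1, by omega, by simpa [Olam] using h1⟩
  intro n x hx
  match n, hx with
  | 0, hx =>
    simp only [Olam, Finset.mem_union, Finset.mem_erase] at hx
    rcases hx with ⟨hne, hx⟩ | hx
    · obtain ⟨m, hm, h1⟩ := h _ x hx
      match m, hm, h1 with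
      | 0, hm, h1 => exact ⟨0, le_rfl, by simp [Olam, h1, hne]⟩
      | 1, hm, h1 => exact ⟨0, le_rfl, by simp [Olam, h1]⟩
      | m + 2, hm, h1 => exact ⟨m+1, by omega, by simpa [Olam] using h1⟩
    · exact key 0 x hx
  | n + 1, hx => exact key (n+1) x (by simpa [Olam] using hx)
theorem SLe.opi {A B : ℕ → Finset ℕ} (h : SLe A B) : SLe (Opi A) (Opi B) := by
  intro n x hx
  match n, hx with
  | 0, hx => simp [Opi] at hx
  | n + 1, hx =>
    obtain ⟨m, hm, h1⟩ := h n x hx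
    exact ⟨m+1, by omega, h1⟩

theorem SLe.osub : ∀ (s : Subst) {A B : ℕ → Finset ℕ}, SLe A B → SLe (Osub s A) (Osub s B)
  | .id, A, B, h => by simpa only [Osub] using h
  | .pi _, A, B, h => by simpa only [Osub] using h.opi
  | .cons s N a, A, B, h => by
      simp only [Osub]
      exact (SLe.osub s (h.olam a)).union (SLe.refl _)
  | .comp s q, A, B, h => by
      simp only [Osub]
      exact SLe.osub s (SLe.osub q h)

theorem olam_opi (a : ℕ) (A) : Olam a (Opi A) = A := by
  funext n
  match n with
  | 0 => simp [Olam, Opi]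
  | n + 1 => simp [Olam, Opi]

theorem olam_lift (a : ℕ) (s : Subst) (N : ℕ → Finset ℕ) :
    Olam a (Osub (.cons (.comp (.pi a) s) (.var a) a) N) = Osub s (Olam a N) := by
  funext n
  match n with
  | 0 => simp [Olam, Osub, Opi, FV]
  | n + 1 => simp [Olam, Osub, Opi, FV]

theorem olam_ren (a b : ℕ) (N : ℕ → Finset ℕ) :
    Olam b (Osub (.cons (.pi b) (.var b) a) N) = Olam a N := by
  funext n
  match n with
  | 0 => simp [Olam, Osub, Opi, FV]
  | n + 1 => simp [Olam, Osub, Opi, FV]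

theorem olam_var_ne {a b : ℕ} (h : a ≠ b) : SLe (FV (.var b)) (Olam a (FV (.var b))) := by
  refine SLe.of_sub fun n => ?_
  match n with
  | 0 => simp [Olam, FV, h.symm]
  | n + 1 => simp [FV]

theorem sle_opi (A) : SLe A (Opi A) := fun n _ h => ⟨n+1, by omega, h⟩

mutual
theorem fv_step : ∀ {M N : Tm}, StepTm false M N → SLe (FV N) (FV M)
  | _, _, .abs => by
      simp only [FV]
      rw [olam_lift]
      exact SLe.refl _
  | _, _, .app (s := s) => by
      simp only [FV]
      intro n x hx
      rcases Finset.mem_union.1 hx with hx | hx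
      · exact SLe.osub s (SLe.of_sub fun n => Finset.subset_union_left) n x hx
      · exact SLe.osub s (SLe.of_sub fun n => Finset.subset_union_right) n x hx
  | _, _, .consVar => by
      simp only [FV, Osub]
      exact SLe.of_sub fun n => Finset.subset_union_right
  | _, _, .new (s := s) h => by
      have := SLe.osub s (olam_var_ne h)
      rw [FV.eq_4, FV.eq_4, Osub]
      exact this.trans (SLe.of_sub fun n => Finset.subset_union_left)
  | _, _, .idVar => by simp only [FV, Osub]; exact SLe.refl _
  | _, _, .clos => by simp only [FV, Osub]; exact SLe.refl _
  | _, _, .pi1 h => by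
      rw [FV.eq_4, Osub]
      exact sle_opi _
  | _, _, .pi2 (s := s) h => by
      rw [FV.eq_4, FV.eq_4, Osub, Osub]
      exact SLe.osub s (sle_opi _)
  | _, _, .alpha1 h1 h2 => by
      simp only [FV]
      rw [olam_ren]
      exact SLe.refl _
  | _, _, .lamCong h => by simp only [FV]; exact (fv_step h).olam _
  | _, _, .appL h => by simp only [FV]; exact (fv_step h).union (SLe.refl _)
  | _, _, .appR h => by simp only [FV]; exact (SLe.refl _).union (fv_step h)
  | _, _, .closL h => by simp only [FV]; exact os_step h _
  | _, _, .closR (s := s) h => by simp only [FV]; exact SLe.osub s (fv_step h)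
theorem os_step : ∀ {s q : Subst}, StepSub false s q → ∀ A, SLe (Osub q A) (Osub s A)
  | _, _, .ass, A => by simp only [Osub]; exact SLe.refl _
  | _, _, .idR, A => by simp only [Osub]; exact SLe.refl _
  | _, _, .idShift, A => by simp only [Osub]; exact SLe.refl _
  | _, _, .consShift, A => by
      simp only [Osub, olam_opi]
      exact SLe.of_sub fun n => Finset.subset_union_left
  | _, _, .map (s := s), A => by
      simp only [Osub, FV]
      intro n x hx
      rcases Finset.mem_union.1 hx with hx | hx
      · exact SLe.osub s (SLe.of_sub fun n => Finset.subset_union_left) n x hx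
      · exact SLe.osub s (SLe.of_sub fun n => Finset.subset_union_right) n x hx
  | _, _, .consL h, A => by simp only [Osub]; exact (os_step h _).union (SLe.refl _)
  | _, _, .consR h, A => by simp only [Osub]; exact (SLe.refl _).union (fv_step h)
  | _, _, .compL h, A => by simp only [Osub]; exact os_step h _
  | _, _, .compR (s := s) h, A => by simp only [Osub]; exact SLe.osub s (os_step h _)
end

mutual
def tval : Tm → ℕ
  | .var _ => 0
  | .app M N => max (tval M) (tval N)
  | .lam _ M => tval M + 1
  | .clos s M => sval s + tval M
def sval : Subst → ℕ
  | .id => 0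
  | .pi _ => 0
  | .cons s N _ => max (sval s) (tval N)
  | .comp s q => sval s + sval q
end

mutual
theorem tval_step : ∀ {M N : Tm}, StepTm false M N → tval N ≤ tval M
  | _, _, .abs => by simp only [tval, sval]; omega
  | _, _, .app => by simp only [tval]; omega
  | _, _, .consVar => by simp only [tval, sval]; omega
  | _, _, .new h => by simp only [tval, sval]; omega
  | _, _, .idVar => by simp only [tval, sval]; omega
  | _, _, .clos => by simp only [tval, sval]; omega
  | _, _, .pi1 h => by simp only [tval, sval]; omega
  | _, _, .pi2 h => by simp only [tval, sval]; omega
  | _, _, .alpha1 h1 h2 => by simp only [tval, sval]; omega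
  | _, _, .lamCong h => by have := tval_step h; simp only [tval]; omega
  | _, _, .appL h => by have := tval_step h; simp only [tval]; omega
  | _, _, .appR h => by have := tval_step h; simp only [tval]; omega
  | _, _, .closL h => by have := sval_step h; simp only [tval]; omega
  | _, _, .closR h => by have := tval_step h; simp only [tval]; omega
theorem sval_step : ∀ {s q : Subst}, StepSub false s q → sval q ≤ sval s
  | _, _, .ass => by simp only [sval]; omega
  | _, _, .idR => by simp only [sval]; omega
  | _, _, .idShift => by simp only [sval]; omega
  | _, _, .consShift => by simp only [sval]; omega
  | _, _, .map => by simp only [sval, tval]; omega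
  | _, _, .consL h => by have := sval_step h; simp only [sval]; omega
  | _, _, .consR h => by have := tval_step h; simp only [sval]; omega
  | _, _, .compL h => by have := sval_step h; simp only [sval]; omega
  | _, _, .compR h => by have := sval_step h; simp only [sval]; omega
end

open Classical in
/-- Rank of an abstraction: large if it is an alpha-redex, `0` otherwise. -/
noncomputable def lrank (a : ℕ) (A : ℕ → Finset ℕ) (v : ℕ) : ℕ :=
  if ∃ i, a ∈ A i then 2 * v + 3 else 0

theorem lrank_le (a A v) : lrank a A v ≤ 2 * v + 3 := by
  unfold lrank; split <;> omega

theorem lrank_mono {a : ℕ} {A B v w} (h : SLe A B) (hv : v ≤ w) : lrank a A v ≤ lrank a B w := by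
  unfold lrank
  split
  · rename_i h1
    obtain ⟨i, hi⟩ := h1
    obtain ⟨m, _, hm⟩ := h i a hi
    rw [if_pos ⟨m, hm⟩]; omega
  · omega

mutual
noncomputable def ttr : Tm → LTree
  | .var _ => .leaf
  | .app M N => .node 1 (ttr M) (ttr N)
  | .lam a M => .node (lrank a (Olam a (FV M)) (tval M)) (ttr M) .leaf
  | .clos s M => .node (2 * (sval s + tval M) + 2) (str s) (ttr M)
noncomputable def str : Subst → LTree
  | .id => .leaf
  | .pi _ => .leaf
  | .cons s N _ => .node 1 (str s) (ttr N)
  | .comp s q => .node (2 * (sval s + sval q) + 2) (str s) (str q)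
end

open LTree in
mutual
theorem ttr_step : ∀ {M N : Tm}, StepTm false M N → Gt (ttr M) (ttr N)
  | _, _, .abs (s := s) (a := a) (M := M) => by
      simp only [ttr, str, tval, sval]
      refine .prec (lt_of_le_of_lt (lrank_le _ _ _) ?_) ?_ .leaf
      · omega
      · refine .prec (by omega) (.prec (by omega) ?_ .leaf) (.r .l0)
        exact .prec (by omega) .leaf .l0
  | _, _, .app (s := s) (M := M) (N := N) => by
      simp only [ttr, tval]
      refine .prec (by omega) (lexle .l0 .l0 (by omega)) (lexle .r0 .l0 (by omega))
  | _, _, .consVar => by simp only [ttr, str]; exact .l .r0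
  | _, _, .new h => by
      simp only [ttr, str, tval, sval]
      exact ctxL .l0 (by omega)
  | _, _, .idVar => by simp only [ttr]; exact .leaf
  | _, _, .clos => by
      simp only [ttr, str, tval, sval]
      exact lexle .r0 (lexle .l0 .l0 (by omega)) (by omega)
  | _, _, .pi1 h => by simp only [ttr]; exact .leaf
  | _, _, .pi2 h => by
      simp only [ttr, str, tval, sval]
      exact ctxL .l0 (by omega)
  | _, _, .alpha1 (a := a) (b := b) (M := M) h1 h2 => by
      simp only [FV] at h1 h2
      simp only [ttr, str, tval, sval, FV]
      rw [olam_ren]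
      have e1 : lrank a (Olam a (FV M)) (tval M) = 2 * tval M + 3 := by
        unfold lrank; rw [if_pos h1]
      have e2 : ∀ v, lrank b (Olam a (FV M)) v = 0 := by
        intro v; unfold lrank; rw [if_neg (by simpa using h2)]
      rw [e1, e2]
      refine .prec (by omega) (.prec (by omega) (.prec (by omega) .leaf .leaf) .l0) .leaf
  | _, _, .lamCong h => by
      simp only [ttr]
      exact ctxL (ttr_step h) (lrank_mono ((fv_step h).olam _) (tval_step h))
  | _, _, .appL h => by simp only [ttr]; exact ctxL (ttr_step h) le_rfl
  | _, _, .appR h => by simp only [ttr]; exact ctxR (ttr_step h) le_rfl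
  | _, _, .closL h => by
      have := sval_step h
      simp only [ttr]; exact ctxL (str_step h) (by omega)
  | _, _, .closR h => by
      have := tval_step h
      simp only [ttr]; exact ctxR (ttr_step h) (by omega)
theorem str_step : ∀ {s q : Subst}, StepSub false s q → Gt (str s) (str q)
  | _, _, .ass => by
      simp only [str, sval]
      exact lexle .r0 (lexle .l0 .l0 (by omega)) (by omega)
  | _, _, .idR => by simp only [str]; exact .l0
  | _, _, .idShift => by simp only [str]; exact .leaf
  | _, _, .consShift => by simp only [str]; exact .l .l0
  | _, _, .map => by
      simp only [str, ttr, sval]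
      exact .prec (by omega) (lexle .l0 .l0 (by omega)) (lexle .r0 .l0 (by omega))
  | _, _, .consL h => by simp only [str]; exact ctxL (str_step h) le_rfl
  | _, _, .consR h => by simp only [str]; exact ctxR (ttr_step h) le_rfl
  | _, _, .compL h => by
      have := sval_step h
      simp only [str]; exact ctxL (str_step h) (by omega)
  | _, _, .compR h => by
      have := sval_step h
      simp only [str]; exact ctxR (str_step h) (by omega)
end

open Classical in
/-- Weight of a context: which of its variables are alpha-redexes, outermost first. -/
noncomputable def cweight : List ℕ → (ℕ → Finset ℕ) → ℕ
  | [], _ => 0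
  | c :: Γ, A => (if ∃ i, c ∈ Olam c A i then 1 else 0) + 2 * cweight Γ (Olam c A)

theorem cweight_mono : ∀ (Γ : List ℕ) {A B}, SLe A B → cweight Γ A ≤ cweight Γ B
  | [], A, B, h => by simp [cweight]
  | c :: Γ, A, B, h => by
      have h1 := h.olam c
      have ih := cweight_mono Γ h1
      simp only [cweight]
      have : (∃ i, c ∈ Olam c A i) → ∃ i, c ∈ Olam c B i := by
        rintro ⟨i, hi⟩
        obtain ⟨m, _, hm⟩ := h1 i c hi
        exact ⟨m, hm⟩
      by_cases hA : ∃ i, c ∈ Olam c A i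
      · rw [if_pos hA, if_pos (this hA)]; omega
      · rw [if_neg hA]; omega

/-- Iterated `Olam`. -/
def olams : List ℕ → (ℕ → Finset ℕ) → (ℕ → Finset ℕ)
  | [], A => A
  | c :: Γ, A => olams Γ (Olam c A)

theorem fv_lamCtx : ∀ (Γ : List ℕ) (M : Tm), FV (lamCtx Γ M) = olams Γ (FV M)
  | [], M => rfl
  | c :: Γ, M => by
      rw [lamCtx, fv_lamCtx Γ, olams, FV]

theorem cweight_alpha (Γ : List ℕ) (a b : ℕ) : ∀ (Δ : List ℕ) (A : ℕ → Finset ℕ),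
    (∃ i, a ∈ olams (Δ ++ [a]) A i) → (∀ i, b ∉ olams (Δ ++ [a]) A i) →
    cweight (Δ ++ b :: Γ) (Osub (Uparrow Δ (.cons (.pi b) (.var b) a)) A)
      < cweight (Δ ++ a :: Γ) A
  | [], A, h1, h2 => by
      simp only [List.nil_append, olams] at h1 h2
      simp only [List.nil_append, Uparrow, cweight]
      rw [olam_ren, if_pos h1, if_neg (by simpa using h2)]
      omega
  | c :: Δ, A, h1, h2 => by
      simp only [List.cons_append, olams] at h1 h2
      have ih := cweight_alpha Γ a b Δ (Olam c A) h1 h2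
      simp only [List.cons_append, Uparrow, cweight]
      rw [olam_lift]
      split <;> split <;> omega

theorem no_inf {α β : Type*} {r : β → β → Prop} (hr : WellFounded r) (m : α → β)
    {R : α → α → Prop} (h : ∀ x y, R x y → r (m y) (m x)) :
    ¬ ∃ f : ℕ → α, ∀ n, R (f n) (f (n + 1)) := by
  rintro ⟨f, hf⟩
  have key : ∀ b, ∀ n, m (f n) = b → False := by
    intro b
    induction b using hr.induction with
    | _ b ih =>
      rintro n rfl
      exact ih _ (h _ _ (hf n)) (n + 1) rfl
  exact key _ 0 rfl

theorem stepJ_lt : ∀ x y, StepJ false x y →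
    Prod.Lex (· < ·) LTree.Lt (cweight y.1 (FV y.2), ttr y.2) (cweight x.1 (FV x.2), ttr x.2) := by
  intro x y h
  cases h with
  | step h =>
    rw [Prod.lex_iff]
    rcases (cweight_mono _ (fv_step h)).lt_or_eq with h1 | h1
    · exact .inl h1
    · exact .inr ⟨h1, ttr_step h⟩
  | alpha2 h1 h2 =>
    apply Prod.Lex.left
    simp only [FVJ, fv_lamCtx] at h1 h2
    rw [FV.eq_4]
    exact cweight_alpha _ _ _ _ _ h1 h2

/-- σπα is strongly normalizing on terms, substitutions, and judgements. -/
theorem spa_strongly_normalizing :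
    (¬ ∃ f : ℕ → Tm, ∀ n, StepTm false (f n) (f (n + 1))) ∧
    (¬ ∃ f : ℕ → Subst, ∀ n, StepSub false (f n) (f (n + 1))) ∧
    (¬ ∃ f : ℕ → List ℕ × Tm, ∀ n, StepJ false (f n) (f (n + 1))) := by
  refine ⟨no_inf LTree.wf ttr fun _ _ h => ttr_step h, no_inf LTree.wf str fun _ _ h => str_step h,
    no_inf (WellFounded.prod_lex wellFounded_lt LTree.wf)
      (fun x : List ℕ × Tm => (cweight x.1 (FV x.2), ttr x.2)) stepJ_lt⟩
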